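/- Let a > 0, c > 0 and ε ∈ ℝ, and define ψ(π) = 1 − (c(π−ε)/a)(1 − e^{−a/(c(π−ε))}) for π > ε. Then for every natural number n, the function ψ_I(π) = 1 − ψ(π)^n is concave and nondecreasing on (ε, ∞). -/

import Mathlib

/-!
The function `w ↦ w (1 - e^{-a/w})` is a slice of the perspective `(w, x) ↦ w f(x / w)` of the
concave function `f x = 1 - e^{-x}`. Perspectives of concave functions are positively homogeneous
and superadditive. They are therefore concave, and nondecreasing in `w` when `f 0 ≥ 0`: passing from
`(w, x)` to `(v, x)` adds `(v - w, 0)`, at which the perspective is `(v - w) f 0`. Hence `ψ` is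
convex and nonincreasing; it is nonnegative because `f x ≤ x`, and so its powers are convex and
nonincreasing as well.
-/

open Set Real

section Perspective

variable {𝕜 E β : Type*} [Field 𝕜] [AddCommGroup E] [Module 𝕜 E] [AddCommMonoid β] [Module 𝕜 β]

/-- The perspective `(w, x) ↦ w f(x / w)` of a function `f`. It is meant for `w > 0`; at `w = 0` it
takes the value `0`. -/
def perspective (f : E → β) (p : 𝕜 × E) : β := p.1 • f (p.1⁻¹ • p.2)

theorem inv_fst_smul_snd_smul {c : 𝕜} (hc : c ≠ 0) (p : 𝕜 × E) :
    (c • p).1⁻¹ • (c • p).2 = p.1⁻¹ • p.2 := by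
  rw [Prod.smul_fst, Prod.smul_snd, smul_eq_mul, mul_inv_rev, mul_smul, inv_smul_smul₀ hc]

theorem inv_fst_smul_snd_add {p q : 𝕜 × E} (hp : p.1 ≠ 0) (hq : q.1 ≠ 0) :
    (p + q).1⁻¹ • (p + q).2 =
      (p.1 / (p.1 + q.1)) • p.1⁻¹ • p.2 + (q.1 / (p.1 + q.1)) • q.1⁻¹ • q.2 := by
  rw [Prod.fst_add, Prod.snd_add, smul_add, smul_smul, smul_smul, div_mul_eq_mul_div,
    div_mul_eq_mul_div, mul_inv_cancel₀ hp, mul_inv_cancel₀ hq, one_div]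

theorem perspective_smul (f : E → β) {c : 𝕜} (hc : c ≠ 0) (p : 𝕜 × E) :
    perspective f (c • p) = c • perspective f p := by
  rw [perspective, inv_fst_smul_snd_smul hc, Prod.smul_fst, smul_assoc, perspective]

variable [LinearOrder 𝕜] {s : Set E}

variable (𝕜 s) in
/-- The natural domain of the perspective of a function on `s`: the open cone over `{1} × s`. -/
def perspectiveDomain : Set (𝕜 × E) := {p | 0 < p.1 ∧ p.1⁻¹ • p.2 ∈ s}

variable [IsStrictOrderedRing 𝕜]

theorem smul_mem_perspectiveDomain {c : 𝕜} {p : 𝕜 × E} (hc : 0 < c)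
    (hp : p ∈ perspectiveDomain 𝕜 s) : c • p ∈ perspectiveDomain 𝕜 s :=
  ⟨mul_pos hc hp.1, (inv_fst_smul_snd_smul hc.ne' p).symm ▸ hp.2⟩

theorem add_mem_perspectiveDomain (hs : Convex 𝕜 s) {p q : 𝕜 × E}
    (hp : p ∈ perspectiveDomain 𝕜 s) (hq : q ∈ perspectiveDomain 𝕜 s) :
    p + q ∈ perspectiveDomain 𝕜 s := by
  have hpq : 0 < p.1 + q.1 := add_pos hp.1 hq.1
  refine ⟨hpq, ?_⟩
  rw [inv_fst_smul_snd_add hp.1.ne' hq.1.ne']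
  exact convex_iff_div.1 hs hp.2 hq.2 hp.1.le hq.1.le hpq

theorem convex_perspectiveDomain (hs : Convex 𝕜 s) : Convex 𝕜 (perspectiveDomain 𝕜 s) :=
  convex_iff_forall_pos.2 fun _ hp _ hq _ _ ha hb _ ↦ add_mem_perspectiveDomain hs
    (smul_mem_perspectiveDomain ha hp) (smul_mem_perspectiveDomain hb hq)

variable [PartialOrder β] [PosSMulMono 𝕜 β] {f : E → β}

theorem perspective_add_perspective_le (hf : ConcaveOn 𝕜 s f) {p q : 𝕜 × E}
    (hp : p ∈ perspectiveDomain 𝕜 s) (hq : q ∈ perspectiveDomain 𝕜 s) :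
    perspective f p + perspective f q ≤ perspective f (p + q) := by
  have hpq : 0 < p.1 + q.1 := add_pos hp.1 hq.1
  calc perspective f p + perspective f q
      = (p.1 + q.1) • ((p.1 / (p.1 + q.1)) • f (p.1⁻¹ • p.2) +
          (q.1 / (p.1 + q.1)) • f (q.1⁻¹ • q.2)) := by
        rw [smul_add, smul_smul, smul_smul, mul_div_cancel₀ _ hpq.ne', mul_div_cancel₀ _ hpq.ne',
          perspective, perspective]
    _ ≤ (p.1 + q.1) • f ((p + q).1⁻¹ • (p + q).2) := by
        rw [inv_fst_smul_snd_add hp.1.ne' hq.1.ne']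
        exact smul_le_smul_of_nonneg_left
          ((concaveOn_iff_div.1 hf).2 hp.2 hq.2 hp.1.le hq.1.le hpq) hpq.le

theorem concaveOn_perspective (hf : ConcaveOn 𝕜 s f) :
    ConcaveOn 𝕜 (perspectiveDomain 𝕜 s) (perspective f) := by
  refine concaveOn_iff_forall_pos.2
    ⟨convex_perspectiveDomain hf.1, fun p hp q hq a b ha hb _ ↦ ?_⟩
  rw [← perspective_smul f ha.ne', ← perspective_smul f hb.ne']
  exact perspective_add_perspective_le hf
    (smul_mem_perspectiveDomain ha hp) (smul_mem_perspectiveDomain hb hq)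

theorem perspective_le_perspective_of_fst_le [IsOrderedAddMonoid β] (hf : ConcaveOn 𝕜 s f)
    (h0s : 0 ∈ s) (hf0 : 0 ≤ f 0) {w v : 𝕜} {x : E} (hw : (w, x) ∈ perspectiveDomain 𝕜 s)
    (hwv : w ≤ v) : perspective f (w, x) ≤ perspective f (v, x) := by
  obtain rfl | hlt := hwv.eq_or_lt
  · rfl
  have hd : 0 < v - w := sub_pos.2 hlt
  have hd0 : (v - w, 0) ∈ perspectiveDomain 𝕜 s := ⟨hd, by rwa [smul_zero]⟩
  calc perspective f (w, x) ≤ perspective f (w, x) + perspective f (v - w, 0) :=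
        le_add_of_nonneg_right <| smul_nonneg hd.le <| by rwa [smul_zero]
    _ ≤ perspective f ((w, x) + (v - w, 0)) := perspective_add_perspective_le hf hw hd0
    _ = perspective f (v, x) := by rw [Prod.mk_add_mk, add_sub_cancel, add_zero]

end Perspective

theorem concaveOn_one_sub_exp_neg : ConcaveOn ℝ univ fun x : ℝ ↦ 1 - exp (-x) :=
  (concaveOn_const 1 convex_univ).sub (convexOn_exp.comp_linearMap (-LinearMap.id))

/-- The function `φ_a` of the paper, in terms of which `ψ p = 1 - φ_a (c (p - ε)) / a`. -/
noncomputable def phi (a w : ℝ) : ℝ := w * (1 - exp (-a / w))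

theorem phi_eq_perspective (a w : ℝ) :
    phi a w = perspective (fun x : ℝ ↦ 1 - exp (-x)) (w, a) := by
  rw [phi, perspective, smul_eq_mul, smul_eq_mul, neg_div, div_eq_inv_mul]

theorem concaveOn_phi (a : ℝ) : ConcaveOn ℝ (Ioi 0) (phi a) := by
  have hslice := (concaveOn_perspective concaveOn_one_sub_exp_neg).comp_affineMap
    ((AffineMap.id ℝ ℝ).prod (AffineMap.const ℝ ℝ a))
  exact (hslice.subset (fun w hw ↦ ⟨hw, mem_univ _⟩) (convex_Ioi 0)).congr
    fun w _ ↦ (phi_eq_perspective a w).symm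

theorem monotoneOn_phi (a : ℝ) : MonotoneOn (phi a) (Ioi 0) := by
  intro w hw v _ hwv
  rw [phi_eq_perspective, phi_eq_perspective]
  exact perspective_le_perspective_of_fst_le concaveOn_one_sub_exp_neg (mem_univ 0) (by simp)
    ⟨hw, mem_univ _⟩ hwv

theorem phi_le {a w : ℝ} (hw : 0 < w) : phi a w ≤ a :=
  calc phi a w ≤ w * (a / w) := by
        rw [phi, neg_div]
        gcongr
        linarith [one_sub_le_exp_neg (a / w)]
    _ = a := mul_div_cancel₀ a hw.ne'

/-- Appendix B: for every `n : ℕ`, the acceptance probability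
`ψ_I(p) = 1 − ψ(p)ⁿ` is concave and nondecreasing on `(ε, ∞)`. -/
theorem acceptance_probability_concave_monotone
    (a c ε : ℝ) (ha : 0 < a) (hc : 0 < c)
    (ψ : ℝ → ℝ)
    (hψ : ∀ p : ℝ, ψ p =
      1 - (c * (p - ε) / a) * (1 - Real.exp (-a / (c * (p - ε))))) :
    ∀ n : ℕ,
      ConcaveOn ℝ (Set.Ioi ε) (fun p : ℝ => 1 - ψ p ^ n) ∧
      MonotoneOn (fun p : ℝ => 1 - ψ p ^ n) (Set.Ioi ε) := by
  intro n
  have hψ_phi : ψ = fun p ↦ 1 - a⁻¹ * phi a (c * (p - ε)) := by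
    funext p
    rw [hψ, phi]
    ring
  have hpos : ∀ p ∈ Ioi ε, 0 < c * (p - ε) := fun p hp ↦ mul_pos hc (sub_pos.2 hp)
  have hphi : ConcaveOn ℝ (Ioi ε) fun p ↦ phi a (c * (p - ε)) :=
    ((concaveOn_phi a).comp_affineMap (c • (AffineMap.id ℝ ℝ - AffineMap.const ℝ ℝ ε))).subset
      hpos (convex_Ioi ε)
  have hconv : ConvexOn ℝ (Ioi ε) ψ :=
    hψ_phi ▸ (convexOn_const 1 (convex_Ioi ε)).sub (hphi.smul (inv_nonneg.2 ha.le))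
  have hanti : AntitoneOn ψ (Ioi ε) := fun p hp q hq hpq ↦ by
    have hle := monotoneOn_phi a (hpos p hp) (hpos q hq) (by gcongr)
    simp only [hψ_phi]
    gcongr
  have hnonneg : ∀ ⦃p⦄, p ∈ Ioi ε → 0 ≤ ψ p := fun p hp ↦
    hψ_phi ▸ sub_nonneg.2 (inv_mul_le_one_of_le₀ (phi_le (hpos p hp)) ha.le)
  exact ⟨(concaveOn_const 1 (convex_Ioi ε)).sub (hconv.pow hnonneg n), fun p hp q hq hpq ↦
    sub_le_sub_left (pow_le_pow_left₀ (hnonneg hq) (hanti hp hq hpq) n) 1⟩
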